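/- Let μ, λ > 0 be reals, let F ∈ (0,1), F′ and H be reals with |F′/(1−F)| ≤ H, and define p := λ(1−F)/(μ + λ(1−F)) and Dp := −μλF′/(μ + λ(1−F))². Then for every y ∈ {0,1}, |y·Dp/p − (1−y)·Dp/(1−p)| ≤ 2H. -/

import Mathlib

/-! The logarithmic derivatives of the jump probabilities simplify to
`Dp / p = -(1 - p) * (F' / (1 - F))` and `-Dp / (1 - p) = p * (F' / (1 - F))`, where
`1 - p = μ / (μ + λ (1 - F))`. For either value of `y` the score coordinate is thus `F' / (1 - F)`
times a factor of absolute value at most `1`, so it is bounded by `H`, hence by `2 * H`. -/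

/-- Score bound (Lemma 2 of the paper): with `p = λ(1-F)/(μ+λ(1-F))` and
`Dp = -μλF'/(μ+λ(1-F))²`, if `|F'/(1-F)| ≤ H` then for `y ∈ {0,1}` the score
coordinate `y·Dp/p − (1−y)·Dp/(1−p)` is bounded in absolute value by `2H`. -/
theorem score_bound (μ lam F F' H : ℝ) (hμ : 0 < μ) (hlam : 0 < lam)
    (hF0 : 0 < F) (hF1 : F < 1) (hH : |F' / (1 - F)| ≤ H)
    (y : ℝ) (hy : y = 0 ∨ y = 1) :
    |y * ((-(μ * lam * F') / (μ + lam * (1 - F)) ^ 2) /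
        (lam * (1 - F) / (μ + lam * (1 - F)))) -
      (1 - y) * ((-(μ * lam * F') / (μ + lam * (1 - F)) ^ 2) /
        (1 - lam * (1 - F) / (μ + lam * (1 - F))))| ≤ 2 * H := by
  have hG : 0 < 1 - F := sub_pos.2 hF1
  have hs : 0 < μ + lam * (1 - F) := by positivity
  have hH0 : 0 ≤ H := (abs_nonneg _).trans hH
  -- a multiple of `F' / (1 - F)` by a factor in `[0, 1]` stays below `H`
  have key : ∀ c : ℝ, 0 ≤ c → c ≤ 1 → |c * (F' / (1 - F))| ≤ 2 * H := by
    intro c hc0 hc1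
    rw [abs_mul, abs_of_nonneg hc0]
    have := mul_le_of_le_one_left (abs_nonneg (F' / (1 - F))) hc1
    linarith
  have hq : 1 - lam * (1 - F) / (μ + lam * (1 - F)) = μ / (μ + lam * (1 - F)) := by
    field_simp
    ring
  rw [hq]
  rcases hy with rfl | rfl
  · have hp1 : lam * (1 - F) / (μ + lam * (1 - F)) ≤ 1 := by
      rw [div_le_one hs]
      linarith
    convert key _ (by positivity) hp1 using 2
    field_simp
    ring
  · have hq1 : μ / (μ + lam * (1 - F)) ≤ 1 := by
      rw [div_le_one hs]
      linarith [mul_pos hlam hG]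
    rw [← abs_neg]
    convert key _ (by positivity) hq1 using 2
    field_simp
    ring
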